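/- Let τ ≥ 1 be an integer and A, B ≥ 0 with A·τ² ≤ 1/2. Let a, b : {0,1,…,τ} → [0,∞) be sequences such that for every t with 0 ≤ t ≤ τ, a_t ≤ A·t·Σ_{t'=0}^{t−1} a_{t'} + B·t·Σ_{t'=0}^{t−1} b_{t'}. Then for every t with 0 ≤ t ≤ τ, a_t ≤ (2ABτ³ + Bτ)·Σ_{t'=0}^{t−1} b_{t'}. -/

import Mathlib

open Finset

/-!
A constant `C ≥ 0` propagates by strong induction through
`a t ≤ α t * ∑ s < t, a s + β t * S t`, with `S` nonnegative and monotone, as soon as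
`α t * t * C + β t ≤ C`: each of the `t` earlier terms is at most `C * S t`.
For `α t = A * t` and `β t = B * t`, writing `x = A * τ ^ 2`, the optimal choice is
`C = B * τ / (1 - x)`; since `1 / (1 - x) ≤ 1 + 2 * x` for `0 ≤ x ≤ 1 / 2`, the division-free
`C = B * τ * (1 + 2 * x)` is admissible too.
-/

section OrderedSemiring

variable {R : Type*}

theorem monotoneOn_sum_range_of_nonneg [AddCommMonoid R] [PartialOrder R] [IsOrderedAddMonoid R]
    {b : ℕ → R} {n : ℕ} (hb : ∀ i < n, 0 ≤ b i) :
    MonotoneOn (fun t ↦ ∑ i ∈ range t, b i) (Set.Iic n) := fun _ _ _ ht hst ↦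
  sum_le_sum_of_subset_of_nonneg (range_mono hst) fun i hi _ ↦
    hb i ((mem_range.1 hi).trans_le ht)

theorem le_mul_of_le_mul_sum_range_add [Semiring R] [PartialOrder R] [IsOrderedRing R]
    {a S α β : ℕ → R} {C : R} {n : ℕ} (hC : 0 ≤ C) (hα : ∀ t ≤ n, 0 ≤ α t)
    (hS₀ : 0 ≤ S 0) (hS : MonotoneOn S (Set.Iic n)) (hαβ : ∀ t ≤ n, α t * t * C + β t ≤ C)
    (hrec : ∀ t ≤ n, a t ≤ α t * ∑ s ∈ range t, a s + β t * S t) :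
    ∀ t ≤ n, a t ≤ C * S t := by
  intro t
  induction t using Nat.strong_induction_on with
  | _ t ih =>
  intro ht
  have hSt : 0 ≤ S t := hS₀.trans (hS n.zero_le ht t.zero_le)
  have hterm : ∀ s ∈ range t, a s ≤ C * S t := fun s hs ↦ by
    have hst : s < t := mem_range.1 hs
    have hsn : s ≤ n := hst.le.trans ht
    exact (ih s hst hsn).trans (mul_le_mul_of_nonneg_left (hS hsn ht hst.le) hC)
  have hsum : ∑ s ∈ range t, a s ≤ t * (C * S t) := by
    simpa using sum_le_card_nsmul _ _ _ hterm
  calc a t ≤ α t * ∑ s ∈ range t, a s + β t * S t := hrec t ht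
    _ ≤ α t * (t * (C * S t)) + β t * S t := by
      gcongr
      exact hα t ht
    _ = (α t * t * C + β t) * S t := by simp only [add_mul, mul_assoc]
    _ ≤ C * S t := mul_le_mul_of_nonneg_right (hαβ t ht) hSt

theorem mul_one_add_two_mul_add_one_le [Semiring R] [PartialOrder R] [IsOrderedRing R]
    {x : R} (hx : 0 ≤ x) (hx' : 2 * x ≤ 1) : x * (1 + 2 * x) + 1 ≤ 1 + 2 * x :=
  calc x * (1 + 2 * x) + 1 ≤ x * (1 + 1) + 1 := by gcongr
    _ = 1 + 2 * x := by rw [one_add_one_eq_two, mul_two, two_mul, add_comm]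

theorem stmt5_general [CommSemiring R] [PartialOrder R] [IsOrderedRing R] {τ : ℕ} {A B : R}
    (hA : 0 ≤ A) (hB : 0 ≤ B) (hAτ : 2 * (A * (τ : R) ^ 2) ≤ 1) {a b : ℕ → R}
    (hb : ∀ t < τ, 0 ≤ b t)
    (hrec : ∀ t ≤ τ, a t ≤ A * t * ∑ s ∈ range t, a s + B * t * ∑ s ∈ range t, b s) :
    ∀ t ≤ τ, a t ≤ (2 * A * B * (τ : R) ^ 3 + B * τ) * ∑ s ∈ range t, b s := by
  have hx : 0 ≤ A * (τ : R) ^ 2 := mul_nonneg hA (pow_nonneg τ.cast_nonneg 2)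
  have hBτ : 0 ≤ B * τ := mul_nonneg hB τ.cast_nonneg
  have hC_eq : 2 * A * B * (τ : R) ^ 3 + B * τ = B * τ * (1 + 2 * (A * (τ : R) ^ 2)) := by ring
  rw [hC_eq]
  have hfactor : 0 ≤ 1 + 2 * (A * (τ : R) ^ 2) :=
    add_nonneg zero_le_one (mul_nonneg zero_le_two hx)
  have hC : 0 ≤ B * τ * (1 + 2 * (A * (τ : R) ^ 2)) := mul_nonneg hBτ hfactor
  refine le_mul_of_le_mul_sum_range_add hC (fun t _ ↦ mul_nonneg hA t.cast_nonneg)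
    (sum_range_zero b).ge (monotoneOn_sum_range_of_nonneg hb) (fun t ht ↦ ?_) hrec
  have htτ : (t : R) ≤ τ := Nat.mono_cast ht
  calc A * t * t * (B * τ * (1 + 2 * (A * (τ : R) ^ 2))) + B * t
      ≤ A * τ * τ * (B * τ * (1 + 2 * (A * (τ : R) ^ 2))) + B * τ := by gcongr
    _ = B * τ * (A * (τ : R) ^ 2 * (1 + 2 * (A * (τ : R) ^ 2)) + 1) := by ring
    _ ≤ B * τ * (1 + 2 * (A * (τ : R) ^ 2)) :=
      mul_le_mul_of_nonneg_left (mul_one_add_two_mul_add_one_le hx hAτ) hBτ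

end OrderedSemiring

theorem stmt5 (τ : ℕ) (hτ : 1 ≤ τ) (A B : ℝ) (hA : 0 ≤ A) (hB : 0 ≤ B)
    (hAτ : A * (τ : ℝ) ^ 2 ≤ 1 / 2)
    (a b : ℕ → ℝ)
    (ha : ∀ t ≤ τ, 0 ≤ a t) (hb : ∀ t ≤ τ, 0 ≤ b t)
    (hrec : ∀ t ≤ τ, a t ≤ A * (t : ℝ) * (∑ t' ∈ Finset.range t, a t') +
      B * (t : ℝ) * (∑ t' ∈ Finset.range t, b t')) :
    ∀ t ≤ τ, a t ≤ (2 * A * B * (τ : ℝ) ^ 3 + B * τ) * ∑ t' ∈ Finset.range t, b t' :=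
  stmt5_general hA hB (by linarith) (fun t ht ↦ hb t ht.le) hrec
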